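/- Let b₁, b₂, b₃ ∈ ℂ[[v₁,v₂,v₃]] be formal power series with b_k ∈ m⁴ for each k, satisfying b_i · ∂_jW = b_j · ∂_iW for all i, j ∈ {1,2,3}. Then there exists a unique c ∈ ℂ[[v₁,v₂,v₃]] such that b_k = c · ∂_kW for all k, and moreover c ∈ m². -/

import Mathlib

open MvPowerSeries

/-- The partial derivatives `∂₁W = -v₂v₃ + 5v₁⁴`, `∂₂W = -v₁v₃ + 5v₂⁴`,
`∂₃W = -v₁v₂ + 5v₃⁴` of `W = -v₁v₂v₃ + v₁⁵ + v₂⁵ + v₃⁵`, as formal power series. -/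
noncomputable def dW : Fin 3 → MvPowerSeries (Fin 3) ℂ :=
  ![ - (X 1 * X 2) + 5 * X 0 ^ 4,
     - (X 0 * X 2) + 5 * X 1 ^ 4,
     - (X 0 * X 1) + 5 * X 2 ^ 4 ]

/-- The maximal ideal `m = (v₁,v₂,v₃)` of `ℂ[[v₁,v₂,v₃]]`. -/
noncomputable def mIdeal : Ideal (MvPowerSeries (Fin 3) ℂ) :=
  Ideal.span {X 0, X 1, X 2}

/-!
Modulo a third variable `X k`, the partial derivatives `∂ᵢW` and `∂ⱼW` become unit multiples of
powers of `X i` and `X j`, and monomial ideals show that `X k, ∂ᵢW, ∂ⱼW` is a regular sequence. All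
three lie in the Jacobson radical, so the sequence may be permuted and `∂ᵢW, ∂ⱼW` is regular as
well. From `bᵢ ∂ⱼW = bⱼ ∂ᵢW` one then gets a unique `c` with `bᵢ = c ∂ᵢW`, and cancelling `∂ᵢW`
gives the other equations. Finally, orders of vanishing add in a domain and `∂ᵢW` has order at most
two, which leaves order at least two for `c`.
-/

section MonomialIdeal

variable {σ R : Type*} [CommSemiring R] {S : Set (σ →₀ ℕ)} {f : MvPowerSeries σ R}

lemma exists_le_of_mem_span_monomial (hf : f ∈ Ideal.span ((monomial · (1 : R)) '' S))
    {d : σ →₀ ℕ} (hd : coeff d f ≠ 0) : ∃ e ∈ S, e ≤ d := by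
  classical
  induction hf using Submodule.span_induction generalizing d with
  | mem _ hx =>
    obtain ⟨e, he, rfl⟩ := hx
    have hde : d = e := by_contra fun hne ↦ hd (coeff_monomial_ne hne 1)
    exact ⟨e, he, hde.ge⟩
  | zero => exact absurd (coeff_zero d) hd
  | add x y _ _ ihx ihy =>
    by_cases hx : coeff d x = 0
    · exact ihy (by rwa [map_add, hx, zero_add] at hd)
    · exact ihx hx
  | smul r x _ ih =>
    rw [smul_eq_mul, coeff_mul] at hd
    obtain ⟨p, hp, hne⟩ := Finset.exists_ne_zero_of_sum_ne_zero hd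
    obtain ⟨e, he, hle⟩ := ih (right_ne_zero_of_mul hne)
    have hpd : p.1 + p.2 = d := Finset.HasAntidiagonal.mem_antidiagonal.mp hp
    exact ⟨e, he, hle.trans (le_add_self.trans_eq hpd)⟩

lemma mem_span_monomial_of_forall_exists_le (hS : S.Finite)
    (hf : ∀ d, coeff d f ≠ 0 → ∃ e ∈ S, e ≤ d) :
    f ∈ Ideal.span ((monomial · (1 : R)) '' S) := by
  classical
  choose! e he hle using hf
  -- `q s` collects the terms of `f` assigned to the generator with exponent `s`, divided by it.
  let q (s : σ →₀ ℕ) : MvPowerSeries σ R := fun d ↦ if e (s + d) = s then coeff (s + d) f else 0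
  have coeff_term (s d) :
      coeff d (monomial s 1 * q s) = if s ≤ d ∧ e d = s then coeff d f else 0 := by
    have coeff_q : coeff (d - s) (q s) =
      if e (s + (d - s)) = s then coeff (s + (d - s)) f else 0 := rfl
    rw [coeff_monomial_mul, one_mul, ite_and]
    exact ite_congr rfl (fun hs ↦ by rw [coeff_q, add_tsub_cancel_of_le hs]) fun _ ↦ rfl
  suffices hsum : f = ∑ s ∈ hS.toFinset, monomial s 1 * q s by
    rw [hsum]
    exact Ideal.sum_mem _ fun s hs ↦ Ideal.mul_mem_right _ _ <|
      Ideal.subset_span ⟨s, hS.mem_toFinset.mp hs, rfl⟩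
  ext d
  simp only [map_sum, coeff_term]
  by_cases hd : coeff d f = 0
  · simp only [hd, ite_self, Finset.sum_const_zero]
  · rw [Finset.sum_eq_single_of_mem (e d) (hS.mem_toFinset.mpr (he d hd))
      fun s _ hs ↦ if_neg fun h ↦ hs h.2.symm, if_pos ⟨hle d hd, rfl⟩]

lemma mem_span_monomial_iff (hS : S.Finite) :
    f ∈ Ideal.span ((monomial · (1 : R)) '' S) ↔ ∀ d, coeff d f ≠ 0 → ∃ e ∈ S, e ≤ d :=
  ⟨fun hf _ ↦ exists_le_of_mem_span_monomial hf, mem_span_monomial_of_forall_exists_le hS⟩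

lemma mem_span_monomial_of_X_pow_mul_mem (hS : S.Finite) {j : σ} (hj : ∀ e ∈ S, e j = 0) {n : ℕ}
    (hf : X j ^ n * f ∈ Ideal.span ((monomial · (1 : R)) '' S)) :
    f ∈ Ideal.span ((monomial · (1 : R)) '' S) := by
  rw [mem_span_monomial_iff hS]
  intro d hd
  have hd' : coeff (Finsupp.single j n + d) (X j ^ n * f) ≠ 0 := by
    rwa [X_pow_eq, coeff_add_monomial_mul, one_mul]
  obtain ⟨e, he, hle⟩ := exists_le_of_mem_span_monomial hf hd'
  refine ⟨e, he, fun l ↦ ?_⟩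
  obtain rfl | hl := eq_or_ne l j
  · simp only [hj e he, zero_le]
  · simpa [hl] using hle l

lemma span_X_pow_eq_span_monomial (n : ℕ) :
    Ideal.span (Set.range (X : σ → MvPowerSeries σ R)) ^ n =
      Ideal.span ((monomial · 1) '' {e | e.degree = n}) := by
  rw [Ideal.span, Submodule.span_pow, ← Set.image_univ,
    Finsupp.image_pow_eq_finsuppProd_image]
  simp [monomial_one_eq]

lemma span_X_eq_span_monomial (k : σ) : Ideal.span {X k} =
    Ideal.span ((monomial · (1 : R)) '' {Finsupp.single k 1}) := by
  rw [Set.image_singleton, X_def]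

lemma span_X_X_pow_eq_span_monomial (i k : σ) (m : ℕ) : Ideal.span {X k, X i ^ m} =
    Ideal.span ((monomial · (1 : R)) '' {Finsupp.single k 1, Finsupp.single i m}) := by
  rw [Set.image_pair, X_pow_eq, X_def]

lemma mem_span_X_pow_iff_le_order [Finite σ] {n : ℕ} :
    f ∈ Ideal.span (Set.range X) ^ n ↔ (n : ℕ∞) ≤ f.order := by
  rw [span_X_pow_eq_span_monomial, mem_span_monomial_iff (Finsupp.finite_of_degree_eq n)]
  refine ⟨fun h ↦ nat_le_order fun d hd ↦ ?_, fun h d hd ↦ ?_⟩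
  · by_contra hne
    obtain ⟨e, rfl, hle⟩ := h d hne
    exact (Finsupp.degree_mono hle).not_gt hd
  · have hnd : n ≤ d.degree := Nat.cast_le.mp (h.trans (order_le hd))
    obtain ⟨e, hle, he⟩ := Finsupp.exists_le_degree_eq d n hnd
    exact ⟨e, he, hle⟩

end MonomialIdeal

section KoszulPair

variable {A : Type*} [CommRing A]

lemma isWeaklyRegular_self_iff (rs : List A) :
    RingTheory.Sequence.IsWeaklyRegular A rs ↔ ∀ (n : ℕ) (hn : n < rs.length) (x : A),
      rs[n] * x ∈ Ideal.ofList (rs.take n) → x ∈ Ideal.ofList (rs.take n) := by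
  simp only [RingTheory.Sequence.isWeaklyRegular_iff, isSMulRegular_quotient_iff_mem_of_smul_mem,
    smul_eq_mul, Ideal.mul_top]

lemma existsUnique_eq_mul_of_isWeaklyRegular {ι : Type*} {d b : ι → A} {i j : ι}
    (hd : RingTheory.Sequence.IsWeaklyRegular A [d i, d j])
    (hb : ∀ k l, b k * d l = b l * d k) : ∃! c, ∀ k, b k = c * d k := by
  rw [isWeaklyRegular_self_iff] at hd
  have hi : ∀ x, d i * x = 0 → x = 0 := by simpa using hd 0 (by simp)
  have hj : ∀ x, d i ∣ d j * x → d i ∣ x := by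
    simpa [Ideal.mem_span_singleton] using hd 1 (by simp)
  have cancel {x y : A} (h : x * d i = y * d i) : x = y :=
    sub_eq_zero.mp (hi _ (by linear_combination h))
  obtain ⟨c, hc⟩ := hj (b i) ⟨b j, by linear_combination hb i j⟩
  refine ⟨c, fun k ↦ cancel ?_, fun c' hc' ↦ cancel ?_⟩
  · linear_combination hb k i + d k * hc
  · linear_combination hc - hc' i

end KoszulPair

section RegularSequence

open RingTheory.Sequence

lemma mul_mem_iff_of_sub_isUnit_mul_mem {A : Type*} [CommRing A] {J : Ideal A} {c x y : A}
    (hc : IsUnit c) (hxy : x - c * y ∈ J) (z : A) : x * z ∈ J ↔ y * z ∈ J := by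
  rw [show x * z = (x - c * y) * z + c * (y * z) by ring,
    J.add_mem_iff_right (J.mul_mem_right z hxy), J.unit_mul_mem_iff_mem hc]

variable {σ R : Type*} [CommRing R] {i j k : σ} {f g : MvPowerSeries σ R} {u v : R} {m n : ℕ}

lemma mul_mem_iff_X_pow_mul_mem {J : Ideal (MvPowerSeries σ R)} (hJ : X k ∈ J) (hu : IsUnit u)
    (hf : X k ∣ f - C u * X i ^ m) (h : MvPowerSeries σ R) : f * h ∈ J ↔ X i ^ m * h ∈ J :=
  mul_mem_iff_of_sub_isUnit_mul_mem (hu.map C) (J.mem_of_dvd hf hJ) h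

lemma span_X_pair_eq_of_X_dvd_sub (hu : IsUnit u) (hf : X k ∣ f - C u * X i ^ m) :
    Ideal.span {X k, f} = Ideal.span {X k, X i ^ m} := by
  obtain ⟨q, hq⟩ := hf
  rw [sub_eq_iff_eq_add.mp hq, Ideal.span_pair_left_mul_add, Ideal.span_insert,
    Ideal.span_singleton_mul_left_unit (hu.map C), ← Ideal.span_insert]

lemma isWeaklyRegular_X_of_X_dvd_sub (hij : i ≠ j) (hik : i ≠ k) (hjk : j ≠ k)
    (hu : IsUnit u) (hv : IsUnit v)
    (hf : X k ∣ f - C u * X i ^ m) (hg : X k ∣ g - C v * X j ^ n) :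
    IsWeaklyRegular (MvPowerSeries σ R) [X k, f, g] := by
  have X_regular (h : MvPowerSeries σ R) (hh : X k * h = 0) : h = 0 :=
    X_mem_nonzeroDivisors.1 h hh
  have f_regular (h : MvPowerSeries σ R) (hh : f * h ∈ Ideal.span {X k}) :
      h ∈ Ideal.span {X k} := by
    rw [mul_mem_iff_X_pow_mul_mem (Ideal.mem_span_singleton_self _) hu hf] at hh
    rw [span_X_eq_span_monomial] at hh ⊢
    exact mem_span_monomial_of_X_pow_mul_mem (Set.finite_singleton _) (by simp [hik]) hh
  have g_regular (h : MvPowerSeries σ R) (hh : g * h ∈ Ideal.span {X k, f}) :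
      h ∈ Ideal.span {X k, f} := by
    rw [mul_mem_iff_X_pow_mul_mem (Ideal.subset_span (Set.mem_insert _ _)) hv hg] at hh
    rw [span_X_pair_eq_of_X_dvd_sub hu hf, span_X_X_pow_eq_span_monomial] at hh ⊢
    exact mem_span_monomial_of_X_pow_mul_mem (Set.toFinite _) (by simp [hij.symm, hjk]) hh
  rw [isWeaklyRegular_self_iff]
  intro l hl h
  simp only [List.length_cons, List.length_nil] at hl
  interval_cases l
  · simpa using X_regular h
  · simpa using f_regular h
  · simpa [Ideal.span_insert] using g_regular h

lemma mem_span_X_of_X_dvd_sub (hm : m ≠ 0) (hf : X k ∣ f - C u * X i ^ m) :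
    f ∈ Ideal.span (Set.range X) := by
  have hX (l : σ) : X l ∈ Ideal.span (Set.range (X : σ → MvPowerSeries σ R)) :=
    Ideal.subset_span (Set.mem_range_self l)
  rw [← sub_add_cancel f (C u * X i ^ m)]
  exact Ideal.add_mem _ (Ideal.mem_of_dvd _ hf (hX k))
    (Ideal.mul_mem_left _ _ (Ideal.pow_mem_of_mem _ (hX i) m hm.bot_lt))

lemma isWeaklyRegular_pair_of_X_dvd_sub [Finite σ] [IsNoetherianRing R]
    (hij : i ≠ j) (hik : i ≠ k) (hjk : j ≠ k) (hu : IsUnit u) (hv : IsUnit v)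
    (hm : m ≠ 0) (hn : n ≠ 0)
    (hf : X k ∣ f - C u * X i ^ m) (hg : X k ∣ g - C v * X j ^ n) :
    IsWeaklyRegular (MvPowerSeries σ R) [f, g] := by
  have mem_jacobson {h : MvPowerSeries σ R} (hh : h ∈ Ideal.span (Set.range X)) :
      h ∈ (Module.annihilator (MvPowerSeries σ R) (MvPowerSeries σ R)).jacobson :=
    Ideal.jacobson_mono bot_le (IsAdicComplete.le_jacobson_bot _ hh)
  have perm : IsWeaklyRegular (MvPowerSeries σ R) [f, g, X k] := by
    have hreg := isWeaklyRegular_X_of_X_dvd_sub hij hik hjk hu hv hf hg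
    refine hreg.of_perm_of_subset_jacobson_annihilator (List.perm_append_comm (l₁ := [X k])) ?_
    simp only [List.forall_mem_cons]
    exact ⟨mem_jacobson (Ideal.subset_span (Set.mem_range_self k)),
      mem_jacobson (mem_span_X_of_X_dvd_sub hm hf), mem_jacobson (mem_span_X_of_X_dvd_sub hn hg),
      List.forall_mem_nil _⟩
  exact ((isWeaklyRegular_append_iff _ [f, g] [X k]).mp perm).1

end RegularSequence

section CuspGradient

variable {σ R : Type*} [Fintype σ] [DecidableEq σ] [CommRing R] {u : σ → R} {a : σ → ℕ}
  {i j k l : σ}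

/-- The gradient of the cusp potential `-∏ X i + ∑ λ i * X i ^ (a i + 1)`, encoded by the
coefficients `u i = λ i * (a i + 1)` of its pure powers, so that its regularity depends only on
whether these are units. -/
noncomputable def cuspGradient (u : σ → R) (a : σ → ℕ) (i : σ) : MvPowerSeries σ R :=
  -∏ j ∈ Finset.univ.erase i, X j + C (u i) * X i ^ a i

lemma X_dvd_cuspGradient_sub (hik : i ≠ k) :
    X k ∣ cuspGradient u a i - C (u i) * X i ^ a i := by
  rw [cuspGradient, add_sub_cancel_right, dvd_neg]
  exact Finset.dvd_prod_of_mem X (Finset.mem_erase.mpr ⟨hik.symm, Finset.mem_univ k⟩)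

lemma isWeaklyRegular_cuspGradient [IsNoetherianRing R] (hij : i ≠ j) (hik : i ≠ k) (hjk : j ≠ k)
    (hui : IsUnit (u i)) (huj : IsUnit (u j)) (hai : a i ≠ 0) (haj : a j ≠ 0) :
    RingTheory.Sequence.IsWeaklyRegular (MvPowerSeries σ R)
      [cuspGradient u a i, cuspGradient u a j] :=
  isWeaklyRegular_pair_of_X_dvd_sub hij hik hjk hui huj hai haj
    (X_dvd_cuspGradient_sub hik) (X_dvd_cuspGradient_sub hjk)

lemma order_cuspGradient_le [Nontrivial R] (hai : a i ≠ 0) :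
    (cuspGradient u a i).order ≤ (Fintype.card σ - 1 : ℕ) := by
  let e : σ →₀ ℕ := ∑ j ∈ Finset.univ.erase i, Finsupp.single j 1
  have he : e i = 0 := by
    simp +contextual [e, Finsupp.finsetSum_apply, Finsupp.single_apply]
  have coeff_prod : coeff e (∏ j ∈ Finset.univ.erase i, X j : MvPowerSeries σ R) = 1 := by
    simp only [X_def, prod_monomial, Finset.prod_const_one, e, coeff_monomial_same]
  have coeff_pow : coeff e (C (u i) * X i ^ a i) = 0 :=
    X_pow_dvd_iff.mp (dvd_mul_left _ _) e (he ▸ hai.bot_lt)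
  have coeff_ne : coeff e (cuspGradient u a i) ≠ 0 := by
    simp [cuspGradient, coeff_prod, coeff_pow]
  refine (order_le coeff_ne).trans_eq ?_
  simp [e, Finset.card_erase_of_mem]

end CuspGradient

lemma mem_span_X_pow_of_mul_mem {σ R : Type*} [Finite σ] [CommRing R] [IsDomain R]
    {c d : MvPowerSeries σ R} {n r : ℕ} (hd : d.order ≤ r)
    (hcd : c * d ∈ Ideal.span (Set.range X) ^ (n + r)) : c ∈ Ideal.span (Set.range X) ^ n := by
  rw [mem_span_X_pow_iff_le_order] at hcd ⊢
  have h : (n : ℕ∞) + r ≤ c.order + r := calc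
    (n : ℕ∞) + r = (n + r : ℕ) := (Nat.cast_add n r).symm
    _ ≤ (c * d).order := hcd
    _ = c.order + d.order := order_mul c d
    _ ≤ c.order + r := add_le_add_right hd _
  exact (ENat.add_le_add_iff_right (ENat.natCast_ne_top r)).mp h

theorem koszul_degree_two_exactness_general {σ R : Type*} [Fintype σ] [DecidableEq σ]
    [CommRing R] [IsDomain R] [IsNoetherianRing R] {u : σ → R} {a : σ → ℕ} {i j k : σ}
    (hij : i ≠ j) (hik : i ≠ k) (hjk : j ≠ k) (hui : IsUnit (u i)) (huj : IsUnit (u j))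
    (hai : a i ≠ 0) (haj : a j ≠ 0) {b : σ → MvPowerSeries σ R}
    (hb : ∀ l l', b l * cuspGradient u a l' = b l' * cuspGradient u a l) :
    (∃! c, ∀ l, b l = c * cuspGradient u a l) ∧
      ∀ c, (∀ l, b l = c * cuspGradient u a l) → ∀ l n, a l ≠ 0 →
        b l ∈ Ideal.span (Set.range X) ^ (n + (Fintype.card σ - 1)) →
        c ∈ Ideal.span (Set.range X) ^ n :=
  ⟨existsUnique_eq_mul_of_isWeaklyRegular
      (isWeaklyRegular_cuspGradient hij hik hjk hui huj hai haj) hb,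
    fun _ hc l _ hal hbl ↦
      mem_span_X_pow_of_mul_mem (order_cuspGradient_le hal) (hc l ▸ hbl)⟩

lemma dW_eq_cuspGradient : dW = cuspGradient (fun _ ↦ 5) (fun _ ↦ 4) := by
  have erase_zero : Finset.univ.erase (0 : Fin 3) = {1, 2} := rfl
  have erase_one : Finset.univ.erase (1 : Fin 3) = {0, 2} := rfl
  have erase_two : Finset.univ.erase (2 : Fin 3) = {0, 1} := rfl
  have C_five : (C 5 : MvPowerSeries (Fin 3) ℂ) = 5 := map_ofNat C 5
  funext i
  fin_cases i <;> simp [dW, cuspGradient, erase_zero, erase_one, erase_two, C_five]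

lemma mIdeal_eq_span_range_X : mIdeal = Ideal.span (Set.range X) := by
  have range_X : Set.range (X : Fin 3 → MvPowerSeries (Fin 3) ℂ) = {X 0, X 1, X 2} := by
    ext
    simp [Fin.exists_fin_succ, eq_comm]
  rw [mIdeal, range_X]

/-- Exactness of the Koszul complex of `dW` in degree two, with control of the
filtration by order of vanishing: if `b₁, b₂, b₃ ∈ m⁴` satisfy
`bᵢ·∂ⱼW = bⱼ·∂ᵢW` for all `i,j`, then there is a unique `c` with `b_k = c·∂_kW`
for all `k`, and moreover this `c` lies in `m²`. -/
theorem koszul_degree_two_exactness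
    (b : Fin 3 → MvPowerSeries (Fin 3) ℂ)
    (hb : ∀ k, b k ∈ mIdeal ^ 4)
    (hcocycle : ∀ i j : Fin 3, b i * dW j = b j * dW i) :
    (∃! c : MvPowerSeries (Fin 3) ℂ, ∀ k, b k = c * dW k) ∧
    (∀ c : MvPowerSeries (Fin 3) ℂ, (∀ k, b k = c * dW k) → c ∈ mIdeal ^ 2) := by
  have five : IsUnit (5 : ℂ) := by norm_num
  rw [dW_eq_cuspGradient] at hcocycle ⊢
  rw [mIdeal_eq_span_range_X] at hb ⊢
  obtain ⟨hexists, hmem⟩ := koszul_degree_two_exactness_general (σ := Fin 3) (R := ℂ)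
    (u := fun _ ↦ 5) (a := fun _ ↦ 4) (i := 0) (j := 1) (k := 2) (by decide) (by decide)
    (by decide) five five four_ne_zero four_ne_zero hcocycle
  exact ⟨hexists, fun c hc ↦ hmem c hc 0 2 four_ne_zero (hb 0)⟩
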